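/- Let E be a real inner product space and let n be a positive integer. Let Φ : E → (Fin n → ℝ) be a map whose output always has all coordinates in [0,1]. Let f, g : (Fin n → ℝ) → ℝ both be entry-wise concave on the unit cube, with f(X) ≥ 0 for every binary vector X ∈ {0,1}ⁿ, and with g(X) = 0 or g(X) ≥ 1 for every binary vector X ∈ {0,1}ⁿ. Let β > 0 and define the loss ℓ : E → ℝ by ℓ(θ) = f(Φ(θ)) + β·g(Φ(θ)). Fix θ ∈ E, let L > 0 with 0 < α < 2/L, and suppose ℓ is differentiable with base-point L-Lipschitz gradient on the closed ball of radius α·‖∇ℓ(θ)‖ around θ. Let ε satisfy 0 ≤ ε < α·‖∇ℓ(θ)‖ and set Δ = ‖∇ℓ(θ)‖·ε + ε²/(2Lα² − 4α). If ℓ(θ) < β + Δ, then there exists a binary vector X ∈ {0,1}ⁿ with g(X) = 0 and f(X) ≤ ℓ(θ) − Δ. -/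

import Mathlib

/-- `F` is entry-wise concave on the unit cube: for every index `i` and every point `x`
with all coordinates in `[0,1]`, the map `t ↦ F (Function.update x i t)` is concave
on `[0,1]`. -/
def EntrywiseConcave (n : ℕ) (F : (Fin n → ℝ) → ℝ) : Prop :=
  ∀ (i : Fin n) (x : Fin n → ℝ), (∀ j, x j ∈ Set.Icc (0 : ℝ) 1) →
    ConcaveOn ℝ (Set.Icc (0 : ℝ) 1) (fun t => F (Function.update x i t))

/-!
A gradient step of length `α` decreases the loss by at least `α (1 - L α / 2) ‖∇ℓ(θ)‖²`, because a
derivative which is Lipschitz relative to its value at the base point controls the first-order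
Taylor remainder along the step. The quantity `Δ` is a concave quadratic in `ε` whose maximum is
exactly this decrease, so the point reached has loss at most `ℓ(θ) - Δ < β`. The loss is an
entrywise concave function of the output vector, so the coordinates of that vector can be rounded
to `0` or `1` one at a time without increasing the loss. At the resulting binary vector, `g ≥ 1`
and `f ≥ 0` would force the loss to be at least `β`.
-/

section Rounding

variable {n : ℕ} {F G : (Fin n → ℝ) → ℝ} {x : Fin n → ℝ}

namespace EntrywiseConcave

theorem add (hF : EntrywiseConcave n F) (hG : EntrywiseConcave n G) :
    EntrywiseConcave n (fun x => F x + G x) :=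
  fun i x hx => (hF i x hx).add (hG i x hx)

theorem const_mul (hF : EntrywiseConcave n F) {c : ℝ} (hc : 0 ≤ c) :
    EntrywiseConcave n (fun x => c * F x) :=
  fun i x hx => (hF i x hx).smul hc

theorem exists_update_le (hF : EntrywiseConcave n F) (hx : ∀ j, x j ∈ Set.Icc (0 : ℝ) 1)
    (i : Fin n) : ∃ c : ℝ, (c = 0 ∨ c = 1) ∧ F (Function.update x i c) ≤ F x := by
  have hmin := (hF i x hx).min_le_of_mem_Icc (Set.left_mem_Icc.2 zero_le_one)
    (Set.right_mem_Icc.2 zero_le_one) (hx i)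
  rw [Function.update_eq_self] at hmin
  rcases min_le_iff.1 hmin with h | h
  · exact ⟨0, .inl rfl, h⟩
  · exact ⟨1, .inr rfl, h⟩

theorem exists_binary_on_le (hF : EntrywiseConcave n F) (hx : ∀ j, x j ∈ Set.Icc (0 : ℝ) 1)
    (s : Finset (Fin n)) :
    ∃ X : Fin n → ℝ, (∀ j, X j ∈ Set.Icc (0 : ℝ) 1) ∧ (∀ i ∈ s, X i = 0 ∨ X i = 1) ∧
      F X ≤ F x := by
  induction s using Finset.induction_on with
  | empty => exact ⟨x, hx, by simp, le_rfl⟩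
  | insert a s _ ih =>
    obtain ⟨X, hX, hXs, hXx⟩ := ih
    obtain ⟨c, hc, hcX⟩ := hF.exists_update_le hX a
    have hc_mem : c ∈ Set.Icc (0 : ℝ) 1 := by rcases hc with rfl | rfl <;> simp
    refine ⟨Function.update X a c, ?_, ?_, hcX.trans hXx⟩
    · exact (Function.forall_update_iff X _).2 ⟨hc_mem, fun j _ => hX j⟩
    · exact (Function.forall_update_iff X fun i y => i ∈ insert a s → y = 0 ∨ y = 1).2
        ⟨fun _ => hc, fun j hja hj => hXs j (Finset.mem_of_mem_insert_of_ne hj hja)⟩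

theorem exists_binary_le (hF : EntrywiseConcave n F) (hx : ∀ j, x j ∈ Set.Icc (0 : ℝ) 1) :
    ∃ X : Fin n → ℝ, (∀ i, X i = 0 ∨ X i = 1) ∧ F X ≤ F x := by
  obtain ⟨X, -, hX, hXx⟩ := hF.exists_binary_on_le hx Finset.univ
  exact ⟨X, fun i => hX i (Finset.mem_univ i), hXx⟩

end EntrywiseConcave

theorem exists_binary_eq_zero_and_le_of_penalized_lt {f g : (Fin n → ℝ) → ℝ} {β : ℝ}
    (hf : EntrywiseConcave n f) (hg : EntrywiseConcave n g)
    (hf0 : ∀ X : Fin n → ℝ, (∀ i, X i = 0 ∨ X i = 1) → 0 ≤ f X)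
    (hg01 : ∀ X : Fin n → ℝ, (∀ i, X i = 0 ∨ X i = 1) → g X = 0 ∨ 1 ≤ g X)
    (hβ : 0 ≤ β) (hx : ∀ j, x j ∈ Set.Icc (0 : ℝ) 1) (hlt : f x + β * g x < β) :
    ∃ X : Fin n → ℝ, (∀ i, X i = 0 ∨ X i = 1) ∧ g X = 0 ∧ f X ≤ f x + β * g x := by
  obtain ⟨X, hX, hXx⟩ := (hf.add (hg.const_mul hβ)).exists_binary_le hx
  rcases hg01 X hX with hgX | hgX
  · exact ⟨X, hX, hgX, by simpa only [hgX, mul_zero, add_zero] using hXx⟩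
  · have hβg : β ≤ β * g X := le_mul_of_one_le_right hβ hgX
    linarith [hf0 X hX]

end Rounding

theorem norm_image_sub_sub_le_of_norm_hasFDerivWithin_sub_le
    {E F : Type*} [NormedAddCommGroup E] [NormedSpace ℝ E]
    [NormedAddCommGroup F] [NormedSpace ℝ F] {f : E → F} {f' : E → E →L[ℝ] F} {x y : E} {L : ℝ}
    (hf : ∀ z ∈ segment ℝ x y, HasFDerivWithinAt f (f' z) (segment ℝ x y) z)
    (hL : ∀ z ∈ segment ℝ x y, ‖f' z - f' x‖ ≤ L * ‖z - x‖) :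
    ‖f y - f x - f' x (y - x)‖ ≤ L / 2 * ‖y - x‖ ^ 2 := by
  let p : ℝ → E := AffineMap.lineMap x y
  have hp_mem : Set.MapsTo p (Set.Icc 0 1) (segment ℝ x y) :=
    fun t ht => lineMap_mem_segment ℝ x y ht
  have hp_norm : ∀ t ∈ Set.Icc (0 : ℝ) 1, ‖p t - x‖ = t * ‖y - x‖ := fun t ht => by
    simp [p, AffineMap.lineMap_apply_module', norm_smul, abs_of_nonneg ht.1]
  let r : ℝ → F := fun t => f (p t) - f x - t • f' x (y - x)
  have hr : ∀ t ∈ Set.Icc (0 : ℝ) 1,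
      HasDerivWithinAt r ((f' (p t) - f' x) (y - x)) (Set.Icc 0 1) t := fun t ht => by
    have hfp := (hf (p t) (hp_mem ht)).comp_hasDerivWithinAt t
      AffineMap.hasDerivWithinAt_lineMap hp_mem
    have hlin := (hasDerivWithinAt_id t (Set.Icc 0 1)).smul_const (f' x (y - x))
    exact ((hfp.sub_const (f x)).sub hlin).congr_deriv (by rw [one_smul, sub_apply])
  have hr_bound : ∀ t ∈ Set.Ico (0 : ℝ) 1,
      ‖(f' (p t) - f' x) (y - x)‖ ≤ L * ‖y - x‖ ^ 2 * t := fun t ht => by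
    have ht' := Set.Ico_subset_Icc_self ht
    calc ‖(f' (p t) - f' x) (y - x)‖ ≤ L * ‖p t - x‖ * ‖y - x‖ :=
          (f' (p t) - f' x).le_of_opNorm_le (hL (p t) (hp_mem ht')) _
      _ = L * ‖y - x‖ ^ 2 * t := by rw [hp_norm t ht']; ring
  have hB : ∀ t : ℝ, HasDerivAt (fun t => L / 2 * ‖y - x‖ ^ 2 * t ^ 2) (L * ‖y - x‖ ^ 2 * t) t :=
    fun t => ((hasDerivAt_pow 2 t).const_mul _).congr_deriv (by push_cast; ring)
  have hr_one := image_norm_le_of_norm_deriv_right_le_deriv_boundary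
    (fun t ht => (hr t ht).continuousWithinAt)
    (fun t ht => (hr t (Set.Ico_subset_Icc_self ht)).mono_of_mem_nhdsWithin
      (Icc_mem_nhdsGE_of_mem ht))
    (by simp [r, p]) hB hr_bound (Set.right_mem_Icc.2 zero_le_one)
  simpa [r, p] using hr_one

theorem image_sub_smul_le_of_norm_hasFDerivWithin_sub_le
    {E : Type*} [NormedAddCommGroup E] [InnerProductSpace ℝ E]
    {f : E → ℝ} {f' : E → E →L[ℝ] ℝ} {x v : E} {L α : ℝ}
    (hf : ∀ z ∈ segment ℝ x (x - α • v),
      HasFDerivWithinAt f (f' z) (segment ℝ x (x - α • v)) z)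
    (hv : f' x = innerSL ℝ v)
    (hL : ∀ z ∈ segment ℝ x (x - α • v), ‖f' z - f' x‖ ≤ L * ‖z - x‖) :
    f (x - α • v) ≤ f x - (α - L * α ^ 2 / 2) * ‖v‖ ^ 2 := by
  have hrem := (Real.le_norm_self _).trans
    (norm_image_sub_sub_le_of_norm_hasFDerivWithin_sub_le hf hL)
  have hstep : x - α • v - x = -(α • v) := by abel
  have hslope : f' x (-(α • v)) = -(α * ‖v‖ ^ 2) := by
    rw [hv, innerSL_apply_apply, inner_neg_right, real_inner_smul_right, real_inner_self_eq_norm_sq]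
  have hlength : ‖-(α • v)‖ ^ 2 = α ^ 2 * ‖v‖ ^ 2 := by
    rw [norm_neg, norm_smul, mul_pow, Real.norm_eq_abs, sq_abs]
  rw [hstep, hslope, hlength] at hrem
  linarith

theorem norm_sub_le_of_mem_segment_sub_smul {E : Type*} [SeminormedAddCommGroup E] [NormedSpace ℝ E]
    {x v z : E} {α : ℝ} (hα : 0 ≤ α) (hz : z ∈ segment ℝ x (x - α • v)) : ‖z - x‖ ≤ α * ‖v‖ := by
  have hz_norm := norm_sub_le_of_mem_segment hz
  rwa [sub_sub_cancel_left, norm_neg, norm_smul, Real.norm_of_nonneg hα] at hz_norm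

theorem mul_sub_sq_div_le {K : Type*} [Field K] [LinearOrder K] [IsStrictOrderedRing K]
    {c : K} (hc : 0 < c) (a b : K) : a * b - b ^ 2 / c ≤ c / 4 * a ^ 2 := by
  have hsq : c / 4 * a ^ 2 - (a * b - b ^ 2 / c) = (b - c / 2 * a) ^ 2 / c := by
    field_simp
    ring
  have hnonneg : 0 ≤ (b - c / 2 * a) ^ 2 / c := by positivity
  linarith

theorem performance_guarantee_9_general
    {E : Type*} [NormedAddCommGroup E] [InnerProductSpace ℝ E]
    {n : ℕ} {Φ : E → Fin n → ℝ} (hΦ : ∀ (θ : E) (i : Fin n), Φ θ i ∈ Set.Icc (0 : ℝ) 1)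
    {f g : (Fin n → ℝ) → ℝ} (hf : EntrywiseConcave n f) (hg : EntrywiseConcave n g)
    (hf0 : ∀ X : Fin n → ℝ, (∀ i, X i = 0 ∨ X i = 1) → 0 ≤ f X)
    (hg01 : ∀ X : Fin n → ℝ, (∀ i, X i = 0 ∨ X i = 1) → g X = 0 ∨ 1 ≤ g X)
    {β : ℝ} (hβ : 0 ≤ β)
    {ℓ : E → ℝ} (hℓ : ∀ θ, ℓ θ = f (Φ θ) + β * g (Φ θ))
    {ℓ' : E → E →L[ℝ] ℝ} {θ v : E} {L α : ℝ} (hα : 0 < α) (hLα : L * α < 2)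
    (hℓ' : ∀ z ∈ segment ℝ θ (θ - α • v),
      HasFDerivWithinAt ℓ (ℓ' z) (segment ℝ θ (θ - α • v)) z)
    (hv : ℓ' θ = innerSL ℝ v)
    (hlip : ∀ z ∈ segment ℝ θ (θ - α • v), ‖ℓ' z - ℓ' θ‖ ≤ L * ‖z - θ‖)
    (ε : ℝ) {Δ : ℝ} (hΔ : Δ = ‖v‖ * ε + ε ^ 2 / (2 * L * α ^ 2 - 4 * α)) (hloss : ℓ θ < β + Δ) :
    ∃ X : Fin n → ℝ, (∀ i, X i = 0 ∨ X i = 1) ∧ g X = 0 ∧ f X ≤ ℓ θ - Δ := by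
  have hc : 0 < 4 * α - 2 * L * α ^ 2 := by linarith [mul_pos hα (sub_pos.2 hLα)]
  have hΔ_le : Δ ≤ (α - L * α ^ 2 / 2) * ‖v‖ ^ 2 :=
    calc Δ = ‖v‖ * ε - ε ^ 2 / (4 * α - 2 * L * α ^ 2) := by
          rw [hΔ, ← neg_sub (4 * α), div_neg, ← sub_eq_add_neg]
      _ ≤ (4 * α - 2 * L * α ^ 2) / 4 * ‖v‖ ^ 2 := mul_sub_sq_div_le hc _ _
      _ = (α - L * α ^ 2 / 2) * ‖v‖ ^ 2 := by ring
  have hstep : ℓ (θ - α • v) ≤ ℓ θ - Δ := by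
    linarith [image_sub_smul_le_of_norm_hasFDerivWithin_sub_le hℓ' hv hlip]
  have hlt : f (Φ (θ - α • v)) + β * g (Φ (θ - α • v)) < β := by linarith [hℓ (θ - α • v)]
  obtain ⟨X, hX, hgX, hfX⟩ :=
    exists_binary_eq_zero_and_le_of_penalized_lt hf hg hf0 hg01 hβ (hΦ _) hlt
  exact ⟨X, hX, hgX, (hfX.trans_eq (hℓ _).symm).trans hstep⟩

theorem performance_guarantee_9
    {E : Type*} [NormedAddCommGroup E] [InnerProductSpace ℝ E] [CompleteSpace E]
    (n : ℕ) (hn : 0 < n) (Φ : E → Fin n → ℝ)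
    (hΦ : ∀ (θ : E) (i : Fin n), Φ θ i ∈ Set.Icc (0 : ℝ) 1)
    (f g : (Fin n → ℝ) → ℝ)
    (hf : EntrywiseConcave n f) (hg : EntrywiseConcave n g)
    (hf0 : ∀ X : Fin n → ℝ, (∀ i, X i = 0 ∨ X i = 1) → 0 ≤ f X)
    (hg01 : ∀ X : Fin n → ℝ, (∀ i, X i = 0 ∨ X i = 1) → g X = 0 ∨ 1 ≤ g X)
    (β : ℝ) (hβ : 0 < β)
    (ℓ : E → ℝ) (hℓ : ∀ θ, ℓ θ = f (Φ θ) + β * g (Φ θ))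
    (θ : E) (L α : ℝ) (hL : 0 < L) (hα : 0 < α) (hα2 : α < 2 / L)
    (hdiff : ∀ θ' : E, ‖θ' - θ‖ ≤ α * ‖gradient ℓ θ‖ → DifferentiableAt ℝ ℓ θ')
    (hlip : ∀ θ' : E, ‖θ' - θ‖ ≤ α * ‖gradient ℓ θ‖ →
      ‖gradient ℓ θ' - gradient ℓ θ‖ ≤ L * ‖θ' - θ‖)
    (ε : ℝ) (hε0 : 0 ≤ ε) (hε1 : ε < α * ‖gradient ℓ θ‖)
    (Δ : ℝ) (hΔ : Δ = ‖gradient ℓ θ‖ * ε + ε ^ 2 / (2 * L * α ^ 2 - 4 * α))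
    (hloss : ℓ θ < β + Δ) :
    ∃ X : Fin n → ℝ, (∀ i, X i = 0 ∨ X i = 1) ∧ g X = 0 ∧ f X ≤ ℓ θ - Δ := by
  have hball : ∀ z ∈ segment ℝ θ (θ - α • gradient ℓ θ), ‖z - θ‖ ≤ α * ‖gradient ℓ θ‖ :=
    fun _ => norm_sub_le_of_mem_segment_sub_smul hα.le
  exact performance_guarantee_9_general (ℓ' := fun z => InnerProductSpace.toDual ℝ E (gradient ℓ z))
    hΦ hf hg hf0 hg01 hβ.le hℓ hα ((lt_div_iff₀' hL).1 hα2)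
    (fun z hz => (hdiff z (hball z hz)).hasGradientAt.hasFDerivAt.hasFDerivWithinAt) rfl
    (fun z hz => by
      simpa only [← map_sub, LinearIsometryEquiv.norm_map] using hlip z (hball z hz))
    ε hΔ hloss
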